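/- arXiv:2204.08312 — 6 statements merged into one kernel-verified Lean document; each statement's English description precedes it below -/
import Mathlib

section
/- Let p ∈ (0,1], ε ∈ (0,1), and let s be a positive integer with s ≥ 4·log₂(1/ε). Under the measure μ_p, define T(ω) to be the least t ∈ ℕ such that exactly s of the coordinates ω(0),…,ω(t−1) equal true (and T(ω) = ∞ if no such t exists). Then the μ_p-probability of the event { ω : (1/2)·s·(1/p) ≤ T(ω) ≤ 2·s·(1/p) } is at least 1 − 2ε. -/
/-!
The bound `T ≤ n` says that the first `n` trials contain at least `s` successes, so both tails of
`T` are tails of sums of independent indicators, which the exponential Markov inequality controls.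
With `E[exp (u X)] = 1 + (exp u - 1) p ≤ exp ((exp u - 1) p)` for an indicator `X` of mean `p`, the
choices `u = log 2` for `T ≤ s / (2 p)` and `u = -log 2` for `2 s / p < T` give, up to rounding, the
exponents `s / 2 - s log 2` and `s log 2 - s`. Both lie below `-(s log 2) / 4`, so each tail is at
most `2 ^ (-s / 4) ≤ ε`.
-/

open MeasureTheory

/-- The least `t : ℕ` such that exactly `s` of the coordinates `ω 0, …, ω (t-1)` equal `true`,
as an element of `ℕ∞` (equal to `⊤` if no such `t` exists). -/
noncomputable def succTime (s : ℕ) (ω : ℕ → Bool) : ℕ∞ :=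
  sInf ((fun t : ℕ => (t : ℕ∞)) ''
    {t : ℕ | ((Finset.range t).filter fun i => ω i = true).card = s})

open ProbabilityTheory Real

section Chernoff

variable {Ω ι : Type*} [MeasurableSpace Ω] {μ : Measure Ω}

lemma mgf_indicator_one [IsProbabilityMeasure μ] {A : Set Ω} (hA : MeasurableSet A) (u : ℝ) :
    mgf (A.indicator fun _ ↦ (1 : ℝ)) μ u = 1 + (exp u - 1) * μ.real A := by
  have exp_indicator : (fun ω ↦ exp (u * A.indicator (fun _ ↦ (1 : ℝ)) ω)) =
      fun ω ↦ 1 + (exp u - 1) * A.indicator 1 ω := by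
    ext ω
    by_cases hω : ω ∈ A <;> simp [hω]
  rw [mgf, exp_indicator, integral_add (integrable_const _)
    (((integrable_const 1).indicator hA).const_mul _), integral_const_mul,
    integral_indicator_one hA]
  simp

variable {A : ι → Set Ω}

lemma mgf_sum_indicator_le (hindep : iIndepSet A μ) (hA : ∀ i, MeasurableSet (A i))
    (S : Finset ι) (u : ℝ) :
    mgf (∑ i ∈ S, (A i).indicator fun _ ↦ (1 : ℝ)) μ u ≤
      exp ((exp u - 1) * ∑ i ∈ S, μ.real (A i)) := by
  have := hindep.isProbabilityMeasure
  rw [hindep.iIndepFun_indicator.mgf_sum fun i ↦ measurable_const.indicator (hA i),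
    Finset.mul_sum, exp_sum]
  refine Finset.prod_le_prod (fun _ _ ↦ mgf_nonneg) fun i _ ↦ ?_
  rw [mgf_indicator_one (hA i), add_comm]
  exact add_one_le_exp _

lemma integrable_exp_mul_sum_indicator (hindep : iIndepSet A μ) (hA : ∀ i, MeasurableSet (A i))
    (S : Finset ι) (u : ℝ) :
    Integrable (fun ω ↦ exp (u * (∑ i ∈ S, (A i).indicator fun _ ↦ (1 : ℝ)) ω)) μ := by
  have := hindep.isProbabilityMeasure
  refine hindep.iIndepFun_indicator.integrable_exp_mul_sum
    (fun i ↦ measurable_const.indicator (hA i)) fun i _ ↦ ?_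
  exact integrable_exp_mul_of_mem_Icc (measurable_const.indicator (hA i)).aemeasurable
    (ae_of_all _ fun ω ↦ ⟨Set.indicator_nonneg (fun _ _ ↦ zero_le_one) ω,
      Set.indicator_le_self' (fun _ _ ↦ zero_le_one) ω⟩)

lemma measureReal_le_sum_indicator_le_exp (hindep : iIndepSet A μ)
    (hA : ∀ i, MeasurableSet (A i)) (S : Finset ι) {u : ℝ} (hu : 0 ≤ u) (x : ℝ) :
    μ.real {ω | x ≤ (∑ i ∈ S, (A i).indicator fun _ ↦ (1 : ℝ)) ω} ≤
      exp ((exp u - 1) * ∑ i ∈ S, μ.real (A i) - u * x) := by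
  have := hindep.isProbabilityMeasure
  refine (measure_ge_le_exp_mul_mgf x hu (integrable_exp_mul_sum_indicator hindep hA S u)).trans ?_
  rw [sub_eq_neg_add, exp_add, ← neg_mul]
  gcongr
  exact mgf_sum_indicator_le hindep hA S u

lemma measureReal_sum_indicator_le_le_exp (hindep : iIndepSet A μ)
    (hA : ∀ i, MeasurableSet (A i)) (S : Finset ι) {u : ℝ} (hu : u ≤ 0) (x : ℝ) :
    μ.real {ω | (∑ i ∈ S, (A i).indicator fun _ ↦ (1 : ℝ)) ω ≤ x} ≤
      exp ((exp u - 1) * ∑ i ∈ S, μ.real (A i) - u * x) := by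
  have := hindep.isProbabilityMeasure
  refine (measure_le_le_exp_mul_mgf x hu (integrable_exp_mul_sum_indicator hindep hA S u)).trans ?_
  rw [sub_eq_neg_add, exp_add, ← neg_mul]
  gcongr
  exact mgf_sum_indicator_le hindep hA S u

lemma iIndepSet_of_measure_biInter_eq_prod (hA : ∀ i, MeasurableSet (A i)) {q : ι → ENNReal}
    (hq : ∀ S : Finset ι, μ (⋂ i ∈ S, A i) = ∏ i ∈ S, q i) : iIndepSet A μ := by
  have measure_eq (i : ι) : μ (A i) = q i := by simpa using hq {i}
  simpa only [iIndepSet_iff_meas_biInter hA, measure_eq] using hq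

end Chernoff

section SuccTime

lemma exists_count_eq_of_le_count {P : ℕ → Prop} [DecidablePred P] {s n : ℕ}
    (h : s ≤ Nat.count P n) : ∃ t ≤ n, Nat.count P t = s := by
  induction n with
  | zero => exact ⟨0, le_rfl, by simp_all⟩
  | succ n ih =>
    by_cases hn : s ≤ Nat.count P n
    · obtain ⟨t, htn, ht⟩ := ih hn
      exact ⟨t, htn.trans n.le_succ, ht⟩
    · refine ⟨n + 1, le_rfl, ?_⟩
      grind

lemma succTime_le_iff {s n : ℕ} {ω : ℕ → Bool} :
    succTime s ω ≤ n ↔ s ≤ Nat.count (fun i ↦ ω i = true) n := by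
  simp only [succTime, ← ENat.lt_natCast_add_one_iff, sInf_lt_iff, Set.exists_mem_image,
    Set.mem_ofPred_eq, ← Nat.count_eq_card_filter_range]
  simp only [ENat.lt_natCast_add_one_iff, Nat.cast_le]
  constructor
  · rintro ⟨t, rfl, htn⟩
    exact Nat.count_monotone _ htn
  · intro h
    obtain ⟨t, htn, ht⟩ := exists_count_eq_of_le_count h
    exact ⟨t, ht, htn⟩

lemma cast_count_eq_sum_indicator {Ω : Type*} (A : ℕ → Set Ω) (n : ℕ) (ω : Ω)
    [DecidablePred fun i ↦ ω ∈ A i] :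
    (Nat.count (fun i ↦ ω ∈ A i) n : ℝ) =
      (∑ i ∈ Finset.range n, (A i).indicator fun _ ↦ (1 : ℝ)) ω := by
  classical
  simp [Nat.count_eq_card_filter_range, Set.indicator_apply]

lemma measurableSet_apply_eq_true {ι : Type*} (i : ι) :
    MeasurableSet {ω : ι → Bool | ω i = true} :=
  measurableSet_eq_fun (measurable_pi_apply i) measurable_const

variable {μ : Measure (ℕ → Bool)} {p : ℝ}

lemma measureReal_succTime_le_le_exp (hindep : iIndepSet (fun i ↦ {ω : ℕ → Bool | ω i = true}) μ)
    (hp : ∀ i, μ.real {ω | ω i = true} = p) (s n : ℕ) {u : ℝ} (hu : 0 ≤ u) :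
    μ.real {ω | succTime s ω ≤ n} ≤ exp ((exp u - 1) * (n * p) - u * s) := by
  have event_eq : {ω : ℕ → Bool | succTime s ω ≤ n} =
      {ω | (s : ℝ) ≤
        (∑ i ∈ Finset.range n, {ω : ℕ → Bool | ω i = true}.indicator fun _ ↦ (1 : ℝ)) ω} := by
    ext ω
    simp only [Set.mem_ofPred_eq, succTime_le_iff, ← Nat.cast_le (α := ℝ)]
    rw [← cast_count_eq_sum_indicator (fun i ↦ {ω : ℕ → Bool | ω i = true})]
    rfl
  rw [event_eq]
  simpa [hp] using
    measureReal_le_sum_indicator_le_exp hindep measurableSet_apply_eq_true (.range n) hu s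

lemma measureReal_lt_succTime_le_exp (hindep : iIndepSet (fun i ↦ {ω : ℕ → Bool | ω i = true}) μ)
    (hp : ∀ i, μ.real {ω | ω i = true} = p) (s n : ℕ) {u : ℝ} (hu : u ≤ 0) :
    μ.real {ω | n < succTime s ω} ≤ exp ((exp u - 1) * (n * p) - u * (s - 1)) := by
  have event_eq : {ω : ℕ → Bool | n < succTime s ω} =
      {ω | (∑ i ∈ Finset.range n, {ω : ℕ → Bool | ω i = true}.indicator fun _ ↦ (1 : ℝ)) ω ≤
        (s : ℝ) - 1} := by
    ext ω
    simp only [Set.mem_ofPred_eq, ← not_le, succTime_le_iff]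
    rw [← cast_count_eq_sum_indicator (fun i ↦ {ω : ℕ → Bool | ω i = true}), le_sub_iff_add_le,
      not_le, ← Nat.add_one_le_iff]
    exact_mod_cast Iff.rfl
  rw [event_eq]
  simpa [hp] using
    measureReal_sum_indicator_le_le_exp hindep measurableSet_apply_eq_true (.range n) hu (s - 1)

lemma measureReal_succTime_le_le_two_rpow
    (hindep : iIndepSet (fun i ↦ {ω : ℕ → Bool | ω i = true}) μ)
    (hp : ∀ i, μ.real {ω | ω i = true} = p) {s n : ℕ} (hn : n * p ≤ s / 2) :
    μ.real {ω | succTime s ω ≤ n} ≤ 2 ^ (-(s / 4 : ℝ)) := by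
  refine (measureReal_succTime_le_le_exp hindep hp s n (log_nonneg one_le_two)).trans ?_
  rw [exp_log two_pos, rpow_def_of_pos two_pos]
  gcongr
  nlinarith [log_two_gt_d9, s.cast_nonneg (α := ℝ)]

lemma measureReal_lt_succTime_le_two_rpow
    (hindep : iIndepSet (fun i ↦ {ω : ℕ → Bool | ω i = true}) μ)
    (hp : ∀ i, μ.real {ω | ω i = true} = p) {s n : ℕ} (hn : 2 * s - 1 ≤ n * p) :
    μ.real {ω | n < succTime s ω} ≤ 2 ^ (-(s / 4 : ℝ)) := by
  refine (measureReal_lt_succTime_le_exp hindep hp s n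
    (neg_nonpos.2 (log_nonneg one_le_two))).trans ?_
  rw [exp_neg, exp_log two_pos, rpow_def_of_pos two_pos]
  gcongr
  nlinarith [log_two_gt_d9, log_two_lt_d9, s.cast_nonneg (α := ℝ)]

end SuccTime

lemma rpow_neg_le_of_logb_one_div_le {b ε x : ℝ} (hb : 1 < b) (hε : 0 < ε)
    (h : logb b (1 / ε) ≤ x) : b ^ (-x) ≤ ε := by
  rw [logb_le_iff_le_rpow hb (by positivity)] at h
  rw [rpow_neg (by positivity)]
  exact inv_le_of_inv_le₀ hε (by simpa using h)

lemma exists_natCast_eq_of_floor_lt_of_le_floor {T : ℕ∞} {a b : ℝ} (hb : 0 ≤ b)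
    (ha : ⌊a⌋₊ < T) (hT : T ≤ ⌊b⌋₊) : ∃ t : ℕ, T = t ∧ a ≤ t ∧ t ≤ b := by
  lift T to ℕ using ne_top_of_le_ne_top (ENat.natCast_ne_top _) hT
  exact ⟨T, rfl, (Nat.lt_of_floor_lt (Nat.cast_lt.1 ha)).le,
    (Nat.le_floor_iff hb).1 (Nat.cast_le.1 hT)⟩

lemma ofReal_one_sub_le_measure {Ω : Type*} [MeasurableSpace Ω] {μ : Measure Ω}
    [IsProbabilityMeasure μ] {E B C : Set Ω} {b c : ℝ} (hcover : Eᶜ ⊆ B ∪ C)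
    (hB : μ.real B ≤ b) (hC : μ.real C ≤ c) : ENNReal.ofReal (1 - (b + c)) ≤ μ E := by
  apply ENNReal.ofReal_le_of_le_toReal
  have one_le : 1 ≤ μ.real E + μ.real Eᶜ := by
    simpa using measureReal_union_le (μ := μ) E Eᶜ
  have compl_le : μ.real Eᶜ ≤ μ.real B + μ.real C :=
    (measureReal_mono hcover).trans (measureReal_union_le B C)
  rw [← measureReal_def]
  linarith

/-- Under the i.i.d. Bernoulli(p) product measure on `ℕ → Bool`, the waiting time `T` for
`s` successes satisfies `(1/2)·s·(1/p) ≤ T ≤ 2·s·(1/p)` with probability at least `1 - 2ε`,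
provided `s ≥ 4·log₂(1/ε)`. -/
theorem waiting_time_concentration
    (p ε : ℝ) (hp0 : 0 < p) (hp1 : p ≤ 1) (hε0 : 0 < ε) (hε1 : ε < 1)
    (s : ℕ) (hs : 0 < s) (hsε : 4 * Real.logb 2 (1 / ε) ≤ (s : ℝ))
    (μ : Measure (ℕ → Bool)) [IsProbabilityMeasure μ]
    (hμ : ∀ (S : Finset ℕ) (g : ℕ → Bool),
      μ {ω | ∀ i ∈ S, ω i = g i} = ∏ i ∈ S, ENNReal.ofReal (if g i then p else 1 - p)) :
    ENNReal.ofReal (1 - 2 * ε) ≤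
      μ {ω | ∃ t : ℕ, succTime s ω = (t : ℕ∞) ∧
        (1 / 2) * (s : ℝ) * (1 / p) ≤ (t : ℝ) ∧ (t : ℝ) ≤ 2 * (s : ℝ) * (1 / p)} := by
  have hindep : iIndepSet (fun i ↦ {ω : ℕ → Bool | ω i = true}) μ :=
    iIndepSet_of_measure_biInter_eq_prod measurableSet_apply_eq_true
      (q := fun _ ↦ ENNReal.ofReal p) fun S ↦ by
        simpa [Set.ofPred_forall] using hμ S fun _ ↦ true
  have hp (i : ℕ) : μ.real {ω | ω i = true} = p := by
    simpa [measureReal_def, hp0.le] using congrArg ENNReal.toReal (hμ {i} fun _ ↦ true)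
  have hε : (2 : ℝ) ^ (-(s / 4 : ℝ)) ≤ ε :=
    rpow_neg_le_of_logb_one_div_le one_lt_two hε0 (by linarith)
  set a := 1 / 2 * (s : ℝ) * (1 / p) with ha
  set b := 2 * (s : ℝ) * (1 / p) with hb
  have hap : ⌊a⌋₊ * p ≤ s / 2 := calc
    ⌊a⌋₊ * p ≤ a * p := by gcongr; exact Nat.floor_le (by positivity)
    _ = s / 2 := by rw [ha]; field_simp
  -- Rounding `b` down costs less than `p ≤ 1` expected successes.
  have hbp : 2 * s - 1 ≤ ⌊b⌋₊ * p := calc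
    2 * s - 1 ≤ (b - 1) * p := by rw [sub_mul, hb]; field_simp; linarith
    _ ≤ ⌊b⌋₊ * p := by gcongr; exact (Nat.sub_one_lt_floor b).le
  rw [two_mul]
  refine ofReal_one_sub_le_measure (fun ω hω ↦ ?_)
    ((measureReal_succTime_le_le_two_rpow hindep hp hap).trans hε)
    ((measureReal_lt_succTime_le_two_rpow hindep hp hbp).trans hε)
  by_contra! h
  simp only [Set.mem_union, Set.mem_ofPred_eq, not_or, not_le, not_lt] at h
  exact hω (exists_natCast_eq_of_floor_lt_of_le_floor (by positivity) h.1 h.2)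
end

section
/- Let N be a positive integer, s ∈ (0, 1/8], and ε ∈ (0,1). Let u : Fin N → Bool be a string in which at most s·N coordinates equal true, and let m be a natural number with m ≤ (1/(2s))·ln(1/ε). If m positions i₁,…,i_m are chosen independently and uniformly at random from Fin N, then the probability that u(i_j) = false for all j = 1,…,m is at least (1−s)^m, and moreover (1−s)^m > ε. -/
open MeasureTheory

/-!
By independence, `m` probes that each miss the ones with probability at least `1 - s` all miss them
with probability at least `(1 - s) ^ m`. For `0 < s ≤ 1 / 2` we have `1 ≤ (1 + 2 * s) * (1 - s)`, so
`exp (-2 * s) < 1 - s`, and `exp (-2 * s) ^ m ≥ ε` for `m` in the given range.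
-/

theorem prod_one_sub_measure_le_pi_forall_notMem {ι : Type*} [Fintype ι] {α : ι → Type*}
    [∀ i, MeasurableSpace (α i)] (μ : ∀ i, Measure (α i)) [∀ i, IsProbabilityMeasure (μ i)]
    (A : ∀ i, Set (α i)) :
    ∏ i, (1 - μ i (A i)) ≤ Measure.pi μ {f | ∀ i, f i ∉ A i} := by
  have one_sub_le (i : ι) : 1 - μ i (A i) ≤ μ i (A i)ᶜ := by
    rw [tsub_le_iff_left, ← measure_univ (μ := μ i)]
    exact measure_univ_le_add_compl (A i)
  calc ∏ i, (1 - μ i (A i)) ≤ ∏ i, μ i (A i)ᶜ := Finset.prod_le_prod' fun i _ ↦ one_sub_le i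
    _ = Measure.pi μ (Set.univ.pi fun i ↦ (A i)ᶜ) := (Measure.pi_pi μ _).symm
    _ = Measure.pi μ {f | ∀ i, f i ∉ A i} := by
      congr 1
      ext f
      simp

theorem ofReal_one_sub_pow_le_pi_forall_notMem {ι α : Type*} [Fintype ι] [MeasurableSpace α]
    (μ : Measure α) [IsProbabilityMeasure μ] {s : ℝ} (hs0 : 0 ≤ s) (hs1 : s ≤ 1) {A : Set α}
    (hA : μ A ≤ ENNReal.ofReal s) :
    ENNReal.ofReal ((1 - s) ^ Fintype.card ι) ≤
      (Measure.pi fun _ : ι ↦ μ) {f | ∀ i, f i ∉ A} :=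
  calc ENNReal.ofReal ((1 - s) ^ Fintype.card ι)
      = (1 - ENNReal.ofReal s) ^ Fintype.card ι := by
        rw [ENNReal.ofReal_pow (sub_nonneg.2 hs1), ENNReal.ofReal_sub _ hs0, ENNReal.ofReal_one]
    _ ≤ (1 - μ A) ^ Fintype.card ι := by gcongr
    _ = ∏ _i : ι, (1 - μ A) := by simp
    _ ≤ (Measure.pi fun _ : ι ↦ μ) {f | ∀ i, f i ∉ A} :=
      prod_one_sub_measure_le_pi_forall_notMem _ _

theorem exp_neg_two_mul_lt_one_sub {s : ℝ} (hs0 : 0 < s) (hs : s ≤ 1 / 2) :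
    Real.exp (-(2 * s)) < 1 - s := by
  have one_le : 1 ≤ (1 - s) * (2 * s + 1) := by
    nlinarith [mul_nonneg hs0.le (sub_nonneg.2 hs)]
  have lt_exp : 2 * s + 1 < Real.exp (2 * s) := Real.add_one_lt_exp (by positivity)
  rw [Real.exp_neg, inv_lt_iff_one_lt_mul₀ (Real.exp_pos _)]
  exact one_le.trans_lt (mul_lt_mul_of_pos_left lt_exp (by linarith))

theorem lt_pow_of_exp_neg_lt {a b ε : ℝ} {m : ℕ} (hε0 : 0 < ε) (hε1 : ε < 1)
    (hab : Real.exp (-a) < b) (hm : m * a ≤ Real.log (1 / ε)) : ε < b ^ m := by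
  rcases eq_or_ne m 0 with rfl | hm0
  · simpa using hε1
  calc ε = Real.exp (-Real.log (1 / ε)) := by
        rw [one_div, Real.log_inv, neg_neg, Real.exp_log hε0]
    _ ≤ Real.exp (m * -a) := by
        rw [mul_neg]
        gcongr
    _ = Real.exp (-a) ^ m := Real.exp_nat_mul _ _
    _ < b ^ m := pow_lt_pow_left₀ hab (Real.exp_pos _).le hm0

theorem toMeasure_uniformOfFintype_setOf_le_ofReal {α : Type*} [Fintype α] [Nonempty α]
    [MeasurableSpace α] [MeasurableSingletonClass α] {s : ℝ} (p : α → Prop) [DecidablePred p]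
    (hp : ((Finset.univ.filter p).card : ℝ) ≤ s * Fintype.card α) :
    (PMF.uniformOfFintype α).toMeasure {a | p a} ≤ ENNReal.ofReal s := by
  have card_pos : (0 : ℝ) < Fintype.card α := Nat.cast_pos.2 Fintype.card_pos
  calc (PMF.uniformOfFintype α).toMeasure {a | p a}
      = (Finset.univ.filter p).card / Fintype.card α := by
        simp [PMF.toMeasure_uniformOfFintype_apply _ (Set.toFinite {a | p a}).measurableSet,
          Fintype.card_subtype]
    _ = ENNReal.ofReal ((Finset.univ.filter p).card / Fintype.card α) := by
        simp [ENNReal.ofReal_div_of_pos card_pos]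
    _ ≤ ENNReal.ofReal s := ENNReal.ofReal_le_ofReal ((div_le_iff₀ card_pos).2 hp)

theorem all_probes_zero_general {α : Type*} [MeasurableSpace α] (μ : Measure α)
    [IsProbabilityMeasure μ] {s ε : ℝ} (hs0 : 0 < s) (hs : s ≤ 1 / 2) (hε0 : 0 < ε) (hε1 : ε < 1)
    {A : Set α} (hA : μ A ≤ ENNReal.ofReal s) {m : ℕ}
    (hm : (m : ℝ) ≤ (1 / (2 * s)) * Real.log (1 / ε)) :
    ENNReal.ofReal ((1 - s) ^ m) ≤ (Measure.pi fun _ : Fin m ↦ μ) {f | ∀ j, f j ∉ A}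
      ∧ ε < (1 - s) ^ m := by
  have mul_le_log : m * (2 * s) ≤ Real.log (1 / ε) := by
    rwa [one_div_mul_eq_div, le_div_iff₀ (by positivity)] at hm
  constructor
  · simpa only [Fintype.card_fin] using
      ofReal_one_sub_pow_le_pi_forall_notMem (ι := Fin m) μ hs0.le (by linarith) hA
  · exact lt_pow_of_exp_neg_lt hε0 hε1 (exp_neg_two_mul_lt_one_sub hs0 hs) mul_le_log

/-- If a string `u` of length `N` has at most `s·N` ones, `s ∈ (0, 1/8]`, and
`m ≤ (1/(2s))·ln(1/ε)` positions are probed independently and uniformly at random, then the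
probability that all probes read `false` is at least `(1-s)^m`, and moreover `(1-s)^m > ε`. -/
theorem all_probes_zero
    (N : ℕ) [NeZero N] (s ε : ℝ) (hs0 : 0 < s) (hs8 : s ≤ 1 / 8)
    (hε0 : 0 < ε) (hε1 : ε < 1) (u : Fin N → Bool)
    (hu : ((Finset.univ.filter fun i => u i = true).card : ℝ) ≤ s * (N : ℝ))
    (m : ℕ) (hm : (m : ℝ) ≤ (1 / (2 * s)) * Real.log (1 / ε)) :
    ENNReal.ofReal ((1 - s) ^ m) ≤
        (Measure.pi fun _ : Fin m => (PMF.uniformOfFintype (Fin N)).toMeasure)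
          {f : Fin m → Fin N | ∀ j, u (f j) = false}
      ∧ ε < (1 - s) ^ m := by
  simpa using all_probes_zero_general _ hs0 (hs8.trans (by norm_num)) hε0 hε1
    (toMeasure_uniformOfFintype_setOf_le_ofReal (u · = true) (by rwa [Fintype.card_fin])) hm
end

section
/- Let n be a positive integer, ε ∈ (0,1), p ∈ (0,1], and let s be a positive integer with s ≥ 4·log₂(1/ε). Under the measure μ_p, define T(ω) to be the least t ∈ ℕ such that exactly s of the coordinates ω(0),…,ω(t−1) equal true (T(ω) = ∞ if no such t exists), and define the estimate p̃(ω) := s / T(ω) if T(ω) ≤ 2·s·2ⁿ, and p̃(ω) := 2^{−n} otherwise. Then with μ_p-probability at least 1 − 2ε the following holds: if p ≥ 2^{−n} then p/2 ≤ p̃(ω) ≤ 2·p and T(ω) ≤ 2·s·(1/p), while if p < 2^{−n} then p̃(ω) ≤ 2^{−(n−1)}. -/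
open MeasureTheory
open scoped Classical

/-- The probability estimate: `s / T(ω)` if `T(ω) ≤ 2·s·2ⁿ`, and `2^(-n)` otherwise. -/
noncomputable def pEst (s n : ℕ) (ω : ℕ → Bool) : ℝ :=
  if succTime s ω ≤ ((2 * s * 2 ^ n : ℕ) : ℕ∞) then
    (s : ℝ) / ((succTime s ω).toNat : ℝ)
  else (2 : ℝ) ^ (-(n : ℤ))

/-!
The `s`-th success arrives by time `t` exactly when the first `t` trials contain at least `s`
successes, so the law of the stopping time `T` is governed by binomial tails. The moment generating
function of the number of successes in `m` trials is at most `exp (p * m * (exp u - 1))`, and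
Chernoff's bound with `u = log 2` and `u = -log 2` shows that `T ≤ s / (2 * p)` and `T > 2 * s / p`
have probability at most `exp (-(log 2 - 1 / 2) * s)` and `exp (-(1 - log 2) * s)`. Both rates
exceed `log 2 / 4`, so each event has probability at most `ε`. Off these two events
`s / (2 * p) < T ≤ 2 * s / p`, and the bounds on the estimate are arithmetic.
-/

section SuccTime

variable {s n t : ℕ} {ω : ℕ → Bool}

theorem exists_le_count_eq {r : ℕ → Prop} [DecidablePred r] (h : s ≤ Nat.count r t) :
    ∃ u ≤ t, Nat.count r u = s := by
  rcases h.eq_or_lt with rfl | h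
  · exact ⟨t, le_rfl, rfl⟩
  · exact ⟨Nat.nth r s, (Nat.nth_lt_of_lt_count h).le,
      Nat.count_nth fun hfin => h.trans_le (Nat.count_le_card hfin t)⟩

theorem succTime_le_natCast_iff :
    succTime s ω ≤ t ↔ s ≤ ((Finset.range t).filter fun i => ω i = true).card := by
  simp only [succTime, ← Nat.count_eq_card_filter_range]
  constructor
  · intro h
    obtain ⟨_, ⟨u, rfl, rfl⟩, hut⟩ := sInf_lt_iff.1 (ENat.lt_natCast_add_one_iff.2 h)
    exact Nat.count_monotone _ (Nat.cast_le.1 (ENat.lt_natCast_add_one_iff.1 hut))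
  · intro h
    obtain ⟨u, hut, hu⟩ := exists_le_count_eq h
    exact sInf_le_of_le ⟨u, hu, rfl⟩ (Nat.cast_le.2 hut)

theorem pEst_eq_div (hT : succTime s ω = t) (ht : t ≤ 2 * s * 2 ^ n) : pEst s n ω = s / t := by
  rw [pEst, hT, if_pos (Nat.cast_le.2 ht), ENat.toNat_natCast]

theorem pEst_le_max (hT : succTime s ω = t) :
    pEst s n ω ≤ max ((s : ℝ) / t) (2 ^ (-(n : ℤ))) := by
  rw [pEst, hT, ENat.toNat_natCast]
  split_ifs
  exacts [le_max_left .., le_max_right ..]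

theorem exists_eq_natCast_of_mem_Ioc_floor {R : Type*} [Semiring R] [LinearOrder R]
    [FloorSemiring R] {a b : R} (hb : 0 ≤ b) {x : ℕ∞}
    (hx : x ∈ Set.Ioc (⌊a⌋₊ : ℕ∞) ⌊b⌋₊) : ∃ t : ℕ, x = t ∧ a < t ∧ t ≤ b := by
  lift x to ℕ using ne_top_of_le_ne_top (ENat.natCast_ne_top _) hx.2
  simp only [Set.mem_Ioc, Nat.cast_lt, Nat.cast_le] at hx
  exact ⟨x, rfl, Nat.lt_of_floor_lt hx.1, (Nat.le_floor_iff hb).1 hx.2⟩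

variable {p : ℝ}

theorem pEst_bounds_of_inv_two_pow_le (hp : (2 : ℝ) ^ (-(n : ℤ)) ≤ p) (hT : succTime s ω = t)
    (ht : 0 < t) (hlow : s / (2 * p) ≤ t) (hup : t ≤ 2 * s * (1 / p)) :
    p / 2 ≤ pEst s n ω ∧ pEst s n ω ≤ 2 * p := by
  have hp0 : 0 < p := lt_of_lt_of_le (by positivity) hp
  have ht0 : (0 : ℝ) < t := Nat.cast_pos.2 ht
  have hbudget : (t : ℝ) ≤ 2 * s * 2 ^ n := by
    have : 1 / p ≤ 2 ^ n := by
      rw [zpow_neg, zpow_natCast] at hp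
      simpa using inv_le_of_inv_le₀ (by positivity) hp
    exact hup.trans (by gcongr)
  rw [pEst_eq_div hT (by exact_mod_cast hbudget)]
  constructor
  · rw [le_div_iff₀ ht0]
    rw [mul_one_div, le_div_iff₀ hp0] at hup
    linarith
  · rw [div_le_iff₀ (by positivity)] at hlow
    rw [div_le_iff₀ ht0]
    linarith

theorem pEst_le_two_mul_inv_two_pow (hp0 : 0 < p) (hp : p ≤ 2 ^ (-(n : ℤ)))
    (hT : succTime s ω = t) (hlow : s / (2 * p) ≤ t) :
    pEst s n ω ≤ 2 ^ (-((n : ℤ) - 1)) := by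
  rw [neg_sub, sub_eq_add_neg, zpow_one_add₀ two_ne_zero]
  have : (0 : ℝ) < 2 ^ (-(n : ℤ)) := by positivity
  refine (pEst_le_max hT).trans (max_le ?_ (by linarith))
  rw [div_le_iff₀ (by positivity)] at hlow
  refine div_le_of_le_mul₀ t.cast_nonneg (by positivity) ?_
  nlinarith [t.cast_nonneg (α := ℝ)]

end SuccTime

section BernoulliTrials

open ProbabilityTheory unitInterval
open Real (exp log)

theorem eq_infinitePi_of_forall_singleton {ι : Type*} {α : ι → Type*} [∀ i, Countable (α i)]
    [∀ i, MeasurableSpace (α i)] [∀ i, MeasurableSingletonClass (α i)]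
    (ρ : ∀ i, Measure (α i)) [∀ i, IsProbabilityMeasure (ρ i)] {μ : Measure (∀ i, α i)}
    (h : ∀ (S : Finset ι) (g : ∀ i, α i), μ {ω | ∀ i ∈ S, ω i = g i} = ∏ i ∈ S, ρ i {g i}) :
    μ = Measure.infinitePi ρ := by
  have := fun i => nonempty_of_isProbabilityMeasure (ρ i)
  refine IsProjectiveLimit.unique (fun S => Measure.ext_of_singleton fun x => ?_)
    (Measure.isProjectiveLimit_infinitePi ρ)
  obtain ⟨g, rfl⟩ : ∃ g, S.restrict g = x :=
    ⟨fun i => if hi : i ∈ S then x ⟨i, hi⟩ else Classical.arbitrary _, by ext; simp⟩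
  have hcyl : S.restrict ⁻¹' {S.restrict g} = {ω | ∀ i ∈ S, ω i = g i} := by
    ext ω
    simp [funext_iff]
  rw [Measure.map_apply (by fun_prop) (measurableSet_singleton _), hcyl, h, Measure.pi_singleton]
  exact (Finset.prod_coe_sort S _).symm

theorem bernoulliMeasure_true_false_singleton (q : I) (b : Bool) :
    bernoulliMeasure true false q {b} = ENNReal.ofReal (if b then (q : ℝ) else 1 - q) := by
  rw [← ofReal_measureReal, bernoulliMeasure_real_apply q (measurableSet_singleton b)]
  cases b <;> simp

theorem card_filter_eq_true_eq_sum_toNat {ι : Type*} (J : Finset ι) (x : ι → Bool) :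
    (J.filter fun i => x i = true).card = ∑ i ∈ J, (x i).toNat := by
  rw [Finset.card_filter]
  exact Finset.sum_congr rfl fun i _ => by cases x i <;> rfl

theorem exp_neg_mul_le_of_logb_le {c ε x : ℝ} (hε : 0 < ε) (hc : log 2 / 4 ≤ c) (hx : 0 ≤ x)
    (h : 4 * Real.logb 2 (1 / ε) ≤ x) : exp (-(c * x)) ≤ ε := by
  have hlog : 0 < log 2 := Real.log_pos one_lt_two
  rw [← Real.le_log_iff_exp_le hε]
  rw [Real.logb, one_div, Real.log_inv, mul_div_assoc', div_le_iff₀ hlog] at h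
  nlinarith

variable {ι Ω : Type*} {mΩ : MeasurableSpace Ω} {P : Measure Ω} {X : ι → Ω → Bool} {q : I}

/-- The random variables `X i` form a family of Bernoulli trials with success probability `q`: they
are independent and each equals `true` with probability `q`. -/
structure IsBernoulliTrials (X : ι → Ω → Bool) (q : I) (P : Measure Ω) : Prop where
  iIndepFun : iIndepFun X P
  hasLaw (i : ι) : HasLaw (X i) (bernoulliMeasure true false q) P

theorem isBernoulliTrials_eval_infinitePi :
    IsBernoulliTrials (fun i ω => ω i) q
      (Measure.infinitePi fun _ : ι => bernoulliMeasure true false q) where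
  iIndepFun := iIndepFun_infinitePi fun _ => measurable_id
  hasLaw i :=
    (measurePreserving_eval_infinitePi (fun _ : ι => bernoulliMeasure true false q) i).hasLaw

namespace IsBernoulliTrials

theorem isProbabilityMeasure (hX : IsBernoulliTrials X q P) : IsProbabilityMeasure P :=
  hX.iIndepFun.isProbabilityMeasure

theorem aemeasurable_toNat (hX : IsBernoulliTrials X q P) (i : ι) :
    AEMeasurable (fun ω => ((X i ω).toNat : ℝ)) P :=
  (Measurable.of_discrete (f := fun b : Bool => (b.toNat : ℝ))).comp_aemeasurable
    (hX.hasLaw i).aemeasurable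

theorem mgf_toNat (hX : IsBernoulliTrials X q P) (i : ι) (t : ℝ) :
    mgf (fun ω => ((X i ω).toNat : ℝ)) P t = 1 + q * (exp t - 1) := by
  have hint := (hX.hasLaw i).integral_comp (f := fun b => exp (t * (b.toNat : ℝ))) (by fun_prop)
  rw [integral_bernoulliMeasure] at hint
  refine hint.trans ?_
  simp only [Bool.toNat_true, Bool.toNat_false, Nat.cast_one, Nat.cast_zero, mul_one, mul_zero,
    Real.exp_zero, smul_eq_mul]
  ring

theorem mgf_card_filter (hX : IsBernoulliTrials X q P) (J : Finset ι) (t : ℝ) :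
    mgf (fun ω => ((J.filter fun i => X i ω = true).card : ℝ)) P t =
      (1 + q * (exp t - 1)) ^ J.card := by
  have hind : ProbabilityTheory.iIndepFun (fun i ω => ((X i ω).toNat : ℝ)) P :=
    hX.iIndepFun.comp (fun _ b => (b.toNat : ℝ)) fun _ => .of_discrete
  simp only [card_filter_eq_true_eq_sum_toNat, Nat.cast_sum]
  rw [← Finset.sum_fn, hind.mgf_sum₀ hX.aemeasurable_toNat,
    Finset.prod_congr rfl fun i _ => hX.mgf_toNat i t, Finset.prod_const]

theorem mgf_card_filter_le_exp (hX : IsBernoulliTrials X q P) (J : Finset ι) (t : ℝ) :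
    mgf (fun ω => ((J.filter fun i => X i ω = true).card : ℝ)) P t ≤
      exp (q * J.card * (exp t - 1)) := by
  have hbase : 0 ≤ 1 + q * (exp t - 1) := by
    nlinarith [q.2.1, q.2.2, Real.exp_pos t]
  calc _ = (1 + q * (exp t - 1)) ^ J.card := hX.mgf_card_filter J t
    _ ≤ exp (q * (exp t - 1)) ^ J.card := by
      gcongr
      linarith [Real.add_one_le_exp (q * (exp t - 1))]
    _ = exp (q * J.card * (exp t - 1)) := by
      rw [← Real.exp_nat_mul]
      ring_nf

theorem integrable_exp_mul_card_filter (hX : IsBernoulliTrials X q P) (J : Finset ι) (t : ℝ) :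
    Integrable (fun ω => exp (t * ((J.filter fun i => X i ω = true).card : ℝ))) P := by
  have := hX.isProbabilityMeasure
  refine integrable_exp_mul_of_mem_Icc (a := 0) (b := J.card) ?_ (ae_of_all _ fun ω =>
    ⟨by positivity, by exact_mod_cast J.card_filter_le _⟩)
  simp only [card_filter_eq_true_eq_sum_toNat, Nat.cast_sum]
  exact Finset.aemeasurable_fun_sum J fun i _ => hX.aemeasurable_toNat i

theorem measureReal_le_card_filter_le (hX : IsBernoulliTrials X q P) (J : Finset ι) {t : ℝ}
    (ht : 0 ≤ t) (a : ℝ) :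
    P.real {ω | a ≤ (J.filter fun i => X i ω = true).card} ≤
      exp (q * J.card * (exp t - 1) - t * a) := by
  have := hX.isProbabilityMeasure
  refine (measure_ge_le_exp_mul_mgf a ht (hX.integrable_exp_mul_card_filter J t)).trans ?_
  rw [sub_eq_neg_add, Real.exp_add, ← neg_mul]
  gcongr
  exact hX.mgf_card_filter_le_exp J t

theorem measureReal_card_filter_le_le (hX : IsBernoulliTrials X q P) (J : Finset ι) {t : ℝ}
    (ht : t ≤ 0) (a : ℝ) :
    P.real {ω | (J.filter fun i => X i ω = true).card ≤ a} ≤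
      exp (q * J.card * (exp t - 1) - t * a) := by
  have := hX.isProbabilityMeasure
  refine (measure_le_le_exp_mul_mgf a ht (hX.integrable_exp_mul_card_filter J t)).trans ?_
  rw [sub_eq_neg_add, Real.exp_add, ← neg_mul]
  gcongr
  exact hX.mgf_card_filter_le_exp J t

variable {X : ℕ → Ω → Bool} {s m : ℕ}

theorem measureReal_succTime_le (hX : IsBernoulliTrials X q P) (hm : 2 * (q : ℝ) * m ≤ s) :
    P.real {ω | succTime s (X · ω) ≤ m} ≤ exp (-((log 2 - 1 / 2) * s)) := by
  have htail := hX.measureReal_le_card_filter_le (Finset.range m)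
    (Real.log_nonneg one_le_two) s
  simp only [Nat.cast_le, ← succTime_le_natCast_iff] at htail
  refine htail.trans (Real.exp_le_exp.2 ?_)
  rw [Finset.card_range, Real.exp_log two_pos]
  linarith

theorem measureReal_lt_succTime (hX : IsBernoulliTrials X q P) (hm : 2 * (s : ℝ) ≤ q * (m + 1)) :
    P.real {ω | m < succTime s (X · ω)} ≤ exp (-((1 - log 2) * s)) := by
  have htail := hX.measureReal_card_filter_le_le (Finset.range m)
    (neg_nonpos.2 (Real.log_nonneg one_le_two)) (s - 1)
  have hset : {ω | (m : ℕ∞) < succTime s (X · ω)} =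
      {ω | (((Finset.range m).filter fun i => X i ω = true).card : ℝ) ≤ s - 1} := by
    ext ω
    rw [Set.mem_ofPred_eq, Set.mem_ofPred_eq, ← not_le, succTime_le_natCast_iff, not_le,
      le_sub_iff_add_le, ← Nat.succ_le_iff, ← Nat.cast_succ, Nat.cast_le]
  rw [hset]
  refine htail.trans (Real.exp_le_exp.2 ?_)
  rw [Finset.card_range, Real.exp_neg, Real.exp_log two_pos]
  linarith [q.2.2, Real.log_two_gt_d9]

theorem one_sub_le_measureReal_succTime_mem_Ioc (hX : IsBernoulliTrials X q P) (hq : 0 < (q : ℝ))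
    {ε : ℝ} (hε : 0 < ε) (hsε : 4 * Real.logb 2 (1 / ε) ≤ s) :
    1 - 2 * ε ≤ P.real {ω | succTime s (X · ω) ∈
      Set.Ioc (⌊s / (2 * (q : ℝ))⌋₊ : ℕ∞) ⌊2 * s * (1 / (q : ℝ))⌋₊} := by
  have := hX.isProbabilityMeasure
  set a := s / (2 * (q : ℝ))
  set b := 2 * s * (1 / (q : ℝ))
  have hearly : P.real {ω | succTime s (X · ω) ≤ ⌊a⌋₊} ≤ ε := by
    have ha : 2 * (q : ℝ) * ⌊a⌋₊ ≤ s := by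
      rw [mul_comm, ← le_div_iff₀ (by positivity)]
      exact Nat.floor_le (by positivity)
    exact (hX.measureReal_succTime_le ha).trans (exp_neg_mul_le_of_logb_le hε
      (by linarith [Real.log_two_gt_d9]) s.cast_nonneg hsε)
  have hlate : P.real {ω | ⌊b⌋₊ < succTime s (X · ω)} ≤ ε := by
    have hb : 2 * (s : ℝ) ≤ q * (⌊b⌋₊ + 1) := by
      rw [← div_le_iff₀' hq, ← mul_one_div]
      exact (Nat.lt_floor_add_one b).le
    exact (hX.measureReal_lt_succTime hb).trans (exp_neg_mul_le_of_logb_le hε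
      (by linarith [Real.log_two_lt_d9]) s.cast_nonneg hsε)
  have hcover : 1 ≤ P.real ({ω | succTime s (X · ω) ∈ Set.Ioc (⌊a⌋₊ : ℕ∞) ⌊b⌋₊} ∪
      ({ω | succTime s (X · ω) ≤ ⌊a⌋₊} ∪ {ω | ⌊b⌋₊ < succTime s (X · ω)})) := by
    rw [← probReal_univ (μ := P)]
    refine measureReal_mono fun ω _ => ?_
    grind
  linarith [hcover.trans ((measureReal_union_le _ _).trans
    (add_le_add_right (measureReal_union_le _ _) _))]

end IsBernoulliTrials

end BernoulliTrials

/-- The algorithm estimating the probability `p` with which a sampler produces a given string: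
with probability at least `1 - 2ε`, if `p ≥ 2^(-n)` then `p/2 ≤ p̃ ≤ 2p` and the number of
sampling rounds is at most `2·s·(1/p)`, while if `p < 2^(-n)` then `p̃ ≤ 2^(-(n-1))`. -/
theorem estimate_sampling_probability
    (n : ℕ) (hn : 0 < n) (ε p : ℝ) (hε0 : 0 < ε) (hε1 : ε < 1)
    (hp0 : 0 < p) (hp1 : p ≤ 1)
    (s : ℕ) (hs : 0 < s) (hsε : 4 * Real.logb 2 (1 / ε) ≤ (s : ℝ))
    (μ : Measure (ℕ → Bool)) [IsProbabilityMeasure μ]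
    (hμ : ∀ (S : Finset ℕ) (g : ℕ → Bool),
      μ {ω | ∀ i ∈ S, ω i = g i} = ∏ i ∈ S, ENNReal.ofReal (if g i then p else 1 - p)) :
    ENNReal.ofReal (1 - 2 * ε) ≤
      μ {ω | ((2 : ℝ) ^ (-(n : ℤ)) ≤ p →
              p / 2 ≤ pEst s n ω ∧ pEst s n ω ≤ 2 * p ∧
              ∃ t : ℕ, succTime s ω = (t : ℕ∞) ∧ (t : ℝ) ≤ 2 * (s : ℝ) * (1 / p)) ∧
             (p < (2 : ℝ) ^ (-(n : ℤ)) →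
              pEst s n ω ≤ (2 : ℝ) ^ (-((n : ℤ) - 1)))} := by
  let q : unitInterval := ⟨p, hp0.le, hp1⟩
  obtain rfl : μ = Measure.infinitePi fun _ => ProbabilityTheory.bernoulliMeasure true false q :=
    eq_infinitePi_of_forall_singleton _ fun S g => by
      simp only [hμ, bernoulliMeasure_true_false_singleton, q]
  rw [← ofReal_measureReal]
  refine ENNReal.ofReal_le_ofReal <|
    (isBernoulliTrials_eval_infinitePi.one_sub_le_measureReal_succTime_mem_Ioc hp0 hε0 hsε).trans <|
    measureReal_mono fun ω hω => ?_
  obtain ⟨t, hT, hlow, hup⟩ := exists_eq_natCast_of_mem_Ioc_floor (by positivity) hω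
  have ht : 0 < t := Nat.cast_pos.1 (lt_of_le_of_lt (by positivity) hlow)
  refine ⟨fun hp => ?_, fun hp => pEst_le_two_mul_inv_two_pow hp0 hp.le hT hlow.le⟩
  obtain ⟨hle, hge⟩ := pEst_bounds_of_inv_two_pow_le hp hT ht hlow.le hup
  exact ⟨hle, hge, t, hT, hup⟩
end

section
/- Let ζ ∈ (0,1], let m be a positive integer, let p : Fin m → ℝ satisfy 0 < p i ≤ 1 for every i, let E : Fin m → Finset (List Bool) be a family of pairwise disjoint finite sets of binary strings, and let q be a weight assignment with 0 ≤ q i x ≤ p i for every i and every x ∈ E i. Call a pair (i, x) with x ∈ E i 'short' if (x.length) + 2·⌈log₂(x.length + 1)⌉ + 2 ≤ log₂(1/(p i)) − log₂(2/ζ). Then the total weight of short pairs satisfies ∑_{(i,x) short} q i x ≤ ζ/2. Consequently, if moreover ∑_i ∑_{x ∈ E i} q i x ≥ ζ, then the total weight of pairs that are not short is at least ζ/2. -/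
open scoped Classical

/-- A fingerprint `x` with associated probability `pi` is short (with slack `ζ`) if
`|x| + 2⌈log₂(|x|+1)⌉ + 2 ≤ log₂(1/pi) − log₂(2/ζ)`. -/
def IsShort (ζ pi : ℝ) (x : List Bool) : Prop :=
  (x.length : ℝ) + 2 * (⌈Real.logb 2 ((x.length : ℝ) + 1)⌉ : ℝ) + 2 ≤
    Real.logb 2 (1 / pi) - Real.logb 2 (2 / ζ)

/-!
The quantity `|x| + 2⌈log₂(|x|+1)⌉ + 2` is the length `ℓ(x)` of a self-delimiting encoding of `x`,
and `x` is short for a probability `r` exactly when `r ≤ (ζ/2) · 2^(-ℓ(x))`. The sum of `2^(-ℓ(x))`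
over any set of strings is at most `1`. Instead of proving an encoding prefix-free, one can see
this by counting: the `2ⁿ` strings of length `n` contribute at most `1/(2(n+1))²` in total, and
these bounds add up to `π²/24`. Since the sets of fingerprints are disjoint, no string is counted
twice.
-/

open Finset Real

theorem sum_length_weight_div_card_pow_le_tsum {α : Type*} [Fintype α] {w : ℕ → ℝ}
    (hw : ∀ n, 0 ≤ w n) (hsum : Summable w) (S : Finset (List α)) :
    ∑ x ∈ S, w x.length / (Fintype.card α : ℝ) ^ x.length ≤ ∑' n, w n := by
  have fiber_le (n : ℕ) :
      ∑ x ∈ S with x.length = n, w x.length / (Fintype.card α : ℝ) ^ x.length ≤ w n := by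
    have hcard : (#{x ∈ S | x.length = n} : ℝ) ≤ (Fintype.card α : ℝ) ^ n := by
      exact_mod_cast card_filter_length_eq_le
    calc ∑ x ∈ S with x.length = n, w x.length / (Fintype.card α : ℝ) ^ x.length
        = ∑ x ∈ S with x.length = n, w n / (Fintype.card α : ℝ) ^ n :=
          sum_congr rfl fun x hx ↦ by rw [(mem_filter.mp hx).2]
      _ = w n * (#{x ∈ S | x.length = n} / (Fintype.card α : ℝ) ^ n) := by
          rw [sum_const, nsmul_eq_mul, mul_div_left_comm]
      _ ≤ w n := mul_le_of_le_one_right (hw n) (div_le_one_of_le₀ hcard (by positivity))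
  calc ∑ x ∈ S, w x.length / (Fintype.card α : ℝ) ^ x.length
      = ∑ n ∈ S.image List.length,
          ∑ x ∈ S with x.length = n, w x.length / (Fintype.card α : ℝ) ^ x.length :=
        (sum_fiberwise_of_maps_to (fun _ ↦ mem_image_of_mem List.length) _).symm
    _ ≤ ∑ n ∈ S.image List.length, w n := sum_le_sum fun n _ ↦ fiber_le n
    _ ≤ ∑' n, w n := hsum.sum_le_tsum _ fun n _ ↦ hw n

/-- The length of the self-delimiting encoding of a string of length `n`. Here `Nat.clog 2 (n + 1)`
is the integer `⌈log₂(n + 1)⌉`. -/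
def selfDelimitingLength (n : ℕ) : ℕ := n + 2 * Nat.clog 2 (n + 1) + 2

theorem one_half_pow_selfDelimitingLength_le (n : ℕ) :
    (1 / 2 : ℝ) ^ selfDelimitingLength n ≤ 1 / (2 * ((n : ℝ) + 1)) ^ 2 / 2 ^ n := by
  have hclog : (n : ℝ) + 1 ≤ 2 ^ Nat.clog 2 (n + 1) := by
    exact_mod_cast Nat.le_pow_clog one_lt_two (n + 1)
  calc (1 / 2 : ℝ) ^ selfDelimitingLength n
      = 1 / (2 * 2 ^ Nat.clog 2 (n + 1)) ^ 2 / 2 ^ n := by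
        rw [selfDelimitingLength, one_div_pow]
        field_simp
        ring
    _ ≤ 1 / (2 * ((n : ℝ) + 1)) ^ 2 / 2 ^ n := by gcongr

theorem hasSum_one_div_two_mul_succ_sq :
    HasSum (fun n : ℕ ↦ 1 / (2 * ((n : ℝ) + 1)) ^ 2) (π ^ 2 / 24) := by
  have hshift : HasSum (fun n : ℕ ↦ 1 / ((n : ℝ) + 1) ^ 2) (π ^ 2 / 6) := by
    simpa using (hasSum_nat_add_iff' 1).mpr hasSum_zeta_two
  have hterm (n : ℕ) : 1 / 4 * (1 / ((n : ℝ) + 1) ^ 2) = 1 / (2 * ((n : ℝ) + 1)) ^ 2 := by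
    field_simp
    norm_num
  have hvalue : 1 / 4 * (π ^ 2 / 6) = π ^ 2 / 24 := by ring
  simp only [← hterm, ← hvalue]
  exact hshift.mul_left (1 / 4)

theorem sum_one_half_pow_selfDelimitingLength_le_one (S : Finset (List Bool)) :
    ∑ x ∈ S, (1 / 2 : ℝ) ^ selfDelimitingLength x.length ≤ 1 := by
  have hsum := hasSum_one_div_two_mul_succ_sq
  calc ∑ x ∈ S, (1 / 2 : ℝ) ^ selfDelimitingLength x.length
      ≤ ∑ x ∈ S, 1 / (2 * ((x.length : ℝ) + 1)) ^ 2 / 2 ^ x.length :=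
        sum_le_sum fun x _ ↦ one_half_pow_selfDelimitingLength_le x.length
    _ ≤ ∑' n : ℕ, 1 / (2 * ((n : ℝ) + 1)) ^ 2 := by
        simpa only [Fintype.card_bool, Nat.cast_ofNat] using
          sum_length_weight_div_card_pow_le_tsum (fun n ↦ by positivity) hsum.summable S
    _ = π ^ 2 / 24 := hsum.tsum_eq
    _ ≤ 1 := by nlinarith [pi_pos, pi_lt_four]

theorem isShort_iff_le {ζ r : ℝ} (hζ : 0 < ζ) (hr : 0 < r) (x : List Bool) :
    IsShort ζ r x ↔ r ≤ ζ / 2 * (1 / 2) ^ selfDelimitingLength x.length := by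
  have hceil : ⌈logb 2 ((x.length : ℝ) + 1)⌉ = Nat.clog 2 (x.length + 1) := by
    exact_mod_cast ceil_logb_natCast (b := 2) (r := ((x.length + 1 : ℕ) : ℝ)) (by positivity)
  have hbound : logb 2 (ζ / 2 * (1 / 2) ^ selfDelimitingLength x.length) =
      -logb 2 (2 / ζ) - selfDelimitingLength x.length := by
    rw [logb_mul (by positivity) (by positivity), logb_pow, one_div, logb_inv,
      logb_self_eq_one one_lt_two, ← inv_div, logb_inv]
    ring
  rw [← logb_le_logb one_lt_two hr (by positivity), hbound, IsShort, hceil, one_div, logb_inv,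
    selfDelimitingLength]
  push_cast
  constructor <;> intro h <;> linarith

theorem short_fingerprints_have_small_weight_general {ι : Type*} {ζ : ℝ} (hζ : 0 < ζ)
    {s : Finset ι} {p : ι → ℝ} (hp : ∀ i ∈ s, 0 < p i) {E : ι → Finset (List Bool)}
    (hdisj : (s : Set ι).PairwiseDisjoint E) {q : ι → List Bool → ℝ}
    (hq : ∀ i ∈ s, ∀ x ∈ E i, q i x ≤ p i) :
    (∑ i ∈ s, ∑ x ∈ E i, (if IsShort ζ (p i) x then q i x else 0)) ≤ ζ / 2 ∧
    (ζ ≤ ∑ i ∈ s, ∑ x ∈ E i, q i x →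
      ζ / 2 ≤ ∑ i ∈ s, ∑ x ∈ E i, (if IsShort ζ (p i) x then 0 else q i x)) := by
  have short_le : ∑ i ∈ s, ∑ x ∈ E i, (if IsShort ζ (p i) x then q i x else 0) ≤ ζ / 2 :=
    calc ∑ i ∈ s, ∑ x ∈ E i, (if IsShort ζ (p i) x then q i x else 0)
        ≤ ∑ i ∈ s, ∑ x ∈ E i, ζ / 2 * (1 / 2) ^ selfDelimitingLength x.length := by
          refine sum_le_sum fun i hi ↦ sum_le_sum fun x hx ↦ ?_
          split_ifs with hshort
          · exact (hq i hi x hx).trans ((isShort_iff_le hζ (hp i hi) x).mp hshort)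
          · positivity
      _ = ζ / 2 * ∑ x ∈ s.biUnion E, (1 / 2) ^ selfDelimitingLength x.length := by
          rw [← sum_biUnion hdisj, mul_sum]
      _ ≤ ζ / 2 :=
          mul_le_of_le_one_right (by positivity) (sum_one_half_pow_selfDelimitingLength_le_one _)
  have split_total : ∑ i ∈ s, ∑ x ∈ E i, q i x =
      ∑ i ∈ s, ∑ x ∈ E i, (if IsShort ζ (p i) x then q i x else 0) +
        ∑ i ∈ s, ∑ x ∈ E i, (if IsShort ζ (p i) x then 0 else q i x) := by
    simp only [← sum_add_distrib, ite_add_ite, add_zero, zero_add, ite_self]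
  exact ⟨short_le, fun htotal ↦ by linarith⟩

/-- Via Kraft's inequality, the total weight of short good fingerprints is at most `ζ/2`;
hence if the total weight of good fingerprints is at least `ζ`, the total weight of good
fingerprints that are not short is at least `ζ/2`. -/
theorem short_fingerprints_have_small_weight
    (ζ : ℝ) (hζ0 : 0 < ζ) (hζ1 : ζ ≤ 1) (m : ℕ) (hm : 0 < m)
    (p : Fin m → ℝ) (hp : ∀ i, 0 < p i ∧ p i ≤ 1)
    (E : Fin m → Finset (List Bool))
    (hdisj : ∀ i j, i ≠ j → Disjoint (E i) (E j))
    (q : Fin m → List Bool → ℝ)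
    (hq : ∀ i, ∀ x ∈ E i, 0 ≤ q i x ∧ q i x ≤ p i) :
    (∑ i, ∑ x ∈ E i, (if IsShort ζ (p i) x then q i x else 0)) ≤ ζ / 2 ∧
    (ζ ≤ ∑ i, ∑ x ∈ E i, q i x →
      ζ / 2 ≤ ∑ i, ∑ x ∈ E i, (if IsShort ζ (p i) x then 0 else q i x)) := by
  exact short_fingerprints_have_small_weight_general hζ0 (fun i _ ↦ (hp i).1)
    (fun i _ j _ ↦ hdisj i j) (fun i _ x hx ↦ (hq i x hx).2)
end

section
/- The sum over all binary strings x (all elements of List Bool) of 2^{−( x.length + 2·⌈log₂(x.length + 1)⌉ + 2 )} is at most 1. Equivalently, ∑_{ℓ=0}^{∞} 2^{ℓ} · 2^{−( ℓ + 2·⌈log₂(ℓ+1)⌉ + 2 )} = ∑_{ℓ=0}^{∞} 2^{−2·⌈log₂(ℓ+1)⌉ − 2} ≤ 1. -/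
/-!
There are `b ^ ℓ` strings of length `ℓ` over an alphabet with `b ≥ 2` letters, so the factor
`b ^ (-ℓ)` in the weight of a string cancels when strings are grouped by length. With `n = ℓ + 1`,
what remains is at most `1 / (b * n) ^ 2 ≤ 1 / (n * (n + 1))`, which telescopes to `1`.
-/

open Filter Finset Real Topology

theorem hasSum_sub_succ_of_antitone {f : ℕ → ℝ} {a : ℝ} (hf : Antitone f)
    (ha : Tendsto f atTop (𝓝 a)) : HasSum (fun n ↦ f n - f (n + 1)) (f 0 - a) := by
  rw [hasSum_iff_tendsto_nat_of_nonneg fun n ↦ sub_nonneg.2 (hf n.le_succ)]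
  simpa only [sum_range_sub'] using ha.const_sub (f 0)

theorem hasSum_inv_succ_mul_succ_succ :
    HasSum (fun n : ℕ ↦ (((n : ℝ) + 1) * ((n : ℝ) + 1 + 1))⁻¹) 1 := by
  have antitone : Antitone fun n : ℕ ↦ 1 / ((n : ℝ) + 1) :=
    fun _ _ ↦ Nat.one_div_le_one_div
  convert hasSum_sub_succ_of_antitone antitone tendsto_one_div_add_atTop_nhds_zero_nat using 1
  · funext n
    push_cast
    field_simp
    ring
  · norm_num

section SumOverLists

variable {α : Type*} [Fintype α] (f : ℕ → ℝ)

theorem summable_comp_list_length_iff :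
    Summable (fun x : List α ↦ f x.length) ↔
      Summable fun ℓ ↦ (Fintype.card α : ℝ) ^ ℓ * f ℓ := by
  have summable_abs : Summable (fun x : List α ↦ |f x.length|) ↔
      Summable fun ℓ ↦ (Fintype.card α : ℝ) ^ ℓ * |f ℓ| := by
    rw [← List.equivSigmaTuple.symm.summable_iff]
    refine (summable_sigma_of_nonneg fun _ ↦ abs_nonneg _).trans ?_
    simp [Summable.of_finite]
  rw [← summable_abs_iff, summable_abs, ← summable_abs_iff (f := fun ℓ ↦ _ * f ℓ)]
  simp only [abs_mul, abs_pow, Nat.abs_cast]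

theorem tsum_comp_list_length :
    ∑' x : List α, f x.length = ∑' ℓ, (Fintype.card α : ℝ) ^ ℓ * f ℓ := by
  by_cases hf : Summable fun x : List α ↦ f x.length
  · have hf_sigma := List.equivSigmaTuple.symm.summable_iff.2 hf
    calc ∑' x : List α, f x.length
        = ∑' y : Σ ℓ, Fin ℓ → α, f (List.equivSigmaTuple.symm y).length :=
          (List.equivSigmaTuple.symm.tsum_eq _).symm
      _ = ∑' (ℓ : ℕ) (y : Fin ℓ → α), f (List.ofFn y).length := hf_sigma.tsum_sigma
      _ = ∑' ℓ, (Fintype.card α : ℝ) ^ ℓ * f ℓ := by simp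
  · rw [tsum_eq_zero_of_not_summable hf,
      tsum_eq_zero_of_not_summable (mt (summable_comp_list_length_iff f).2 hf)]

end SumOverLists

/-- The number of letters that the self-delimiting encoding over a `b`-letter alphabet prepends to
a string of length `ℓ`: the base-`b` digits of `ℓ`, each written twice, and a delimiter of two
letters. The digits are counted as `⌈log_b (ℓ + 1)⌉`, which is `0` for `ℓ = 0`. -/
noncomputable def headerLength (b ℓ : ℕ) : ℤ :=
  2 * ⌈logb b ((ℓ : ℝ) + 1)⌉ + 2

section HeaderLength

variable {b : ℕ} (hb : 1 < b)
include hb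

theorem le_zpow_ceil_logb {x : ℝ} (hx : 0 ≤ x) : x ≤ (b : ℝ) ^ ⌈logb b x⌉ := by
  rw [ceil_logb_natCast hx]
  exact Int.self_le_zpow_clog hb x

theorem zpow_neg_headerLength_le_inv_sq (ℓ : ℕ) :
    (b : ℝ) ^ (-headerLength b ℓ) ≤ ((b * ((ℓ : ℝ) + 1)) ^ 2)⁻¹ := by
  have b_ne_zero : (b : ℝ) ≠ 0 := by positivity
  calc (b : ℝ) ^ (-headerLength b ℓ)
      = ((b * (b : ℝ) ^ ⌈logb b ((ℓ : ℝ) + 1)⌉) ^ 2)⁻¹ := by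
        rw [← zpow_one_add₀ b_ne_zero, ← zpow_natCast, ← zpow_mul, ← zpow_neg, headerLength]
        congr 1
        push_cast
        ring
    _ ≤ ((b * ((ℓ : ℝ) + 1)) ^ 2)⁻¹ := by
        gcongr
        exact le_zpow_ceil_logb hb (by positivity)

theorem zpow_neg_headerLength_le_inv_mul_succ (ℓ : ℕ) :
    (b : ℝ) ^ (-headerLength b ℓ) ≤ (((ℓ : ℝ) + 1) * ((ℓ : ℝ) + 1 + 1))⁻¹ := by
  have two_le_b : (2 : ℝ) ≤ b := mod_cast hb
  have succ_le_b_mul : (ℓ : ℝ) + 1 + 1 ≤ b * (ℓ + 1) := by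
    nlinarith [(ℓ.cast_nonneg : (0 : ℝ) ≤ ℓ)]
  calc (b : ℝ) ^ (-headerLength b ℓ)
      ≤ ((b * ((ℓ : ℝ) + 1)) ^ 2)⁻¹ := zpow_neg_headerLength_le_inv_sq hb ℓ
    _ ≤ (((ℓ : ℝ) + 1) * ((ℓ : ℝ) + 1 + 1))⁻¹ := by
        rw [sq]
        gcongr
        linarith

theorem summable_zpow_neg_headerLength :
    Summable fun ℓ ↦ (b : ℝ) ^ (-headerLength b ℓ) :=
  .of_nonneg_of_le (fun _ ↦ by positivity) (zpow_neg_headerLength_le_inv_mul_succ hb)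
    hasSum_inv_succ_mul_succ_succ.summable

theorem tsum_zpow_neg_headerLength_le_one :
    ∑' ℓ, (b : ℝ) ^ (-headerLength b ℓ) ≤ 1 :=
  hasSum_le (zpow_neg_headerLength_le_inv_mul_succ hb)
    (summable_zpow_neg_headerLength hb).hasSum hasSum_inv_succ_mul_succ_succ

end HeaderLength

theorem zpow_mul_zpow_neg_add {G : Type*} [GroupWithZero G] {a : G} (ha : a ≠ 0) (m n : ℤ) :
    a ^ m * a ^ (-(m + n)) = a ^ (-n) := by
  rw [← zpow_add₀ ha, neg_add, add_neg_cancel_left]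

theorem kraft_self_delimiting_general (α : Type*) [Fintype α] [Nontrivial α] {b : ℕ}
    (hb : Fintype.card α = b) :
    Summable (fun x : List α ↦ (b : ℝ) ^ (-(x.length + headerLength b x.length))) ∧
    (∑' x : List α, (b : ℝ) ^ (-(x.length + headerLength b x.length)) ≤ 1) ∧
    (∑' ℓ : ℕ, (b : ℝ) ^ (ℓ : ℤ) * (b : ℝ) ^ (-(ℓ + headerLength b ℓ)) =
      ∑' ℓ, (b : ℝ) ^ (-headerLength b ℓ)) ∧
    (∑' ℓ, (b : ℝ) ^ (-headerLength b ℓ) ≤ 1) := by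
  have one_lt_b : 1 < b := hb ▸ Fintype.one_lt_card
  have cancel_length (ℓ : ℕ) :
      (b : ℝ) ^ (ℓ : ℤ) * (b : ℝ) ^ (-(ℓ + headerLength b ℓ)) = (b : ℝ) ^ (-headerLength b ℓ) :=
    zpow_mul_zpow_neg_add (by positivity) _ _
  have tsum_le_one := tsum_zpow_neg_headerLength_le_one one_lt_b
  refine ⟨(summable_comp_list_length_iff fun ℓ ↦ (b : ℝ) ^ (-(ℓ + headerLength b ℓ))).2 ?_,
    (tsum_comp_list_length fun ℓ ↦ (b : ℝ) ^ (-(ℓ + headerLength b ℓ))).trans_le ?_,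
    tsum_congr cancel_length, tsum_le_one⟩
  · simpa only [hb, ← zpow_natCast, cancel_length] using summable_zpow_neg_headerLength one_lt_b
  · simpa only [hb, ← zpow_natCast, cancel_length] using tsum_le_one

/-- Kraft inequality computation for the self-delimiting encoding of length
`|x| + 2⌈log₂(|x|+1)⌉ + 2`: the sum over all binary strings `x` of
`2^{-(|x| + 2⌈log₂(|x|+1)⌉ + 2)}` is at most 1; equivalently, grouping by length,
`∑_ℓ 2^ℓ · 2^{-(ℓ + 2⌈log₂(ℓ+1)⌉ + 2)} = ∑_ℓ 2^{-(2⌈log₂(ℓ+1)⌉ + 2)} ≤ 1`. -/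
theorem kraft_self_delimiting :
    (∑' x : List Bool,
        (2 : ℝ) ^ (-((x.length : ℤ) + 2 * ⌈Real.logb 2 ((x.length : ℝ) + 1)⌉ + 2)) ≤ 1) ∧
    (∑' ℓ : ℕ, (2 : ℝ) ^ (ℓ : ℤ) *
        (2 : ℝ) ^ (-((ℓ : ℤ) + 2 * ⌈Real.logb 2 ((ℓ : ℝ) + 1)⌉ + 2)) =
      ∑' ℓ : ℕ, (2 : ℝ) ^ (-(2 * ⌈Real.logb 2 ((ℓ : ℝ) + 1)⌉ + 2))) ∧
    (∑' ℓ : ℕ, (2 : ℝ) ^ (-(2 * ⌈Real.logb 2 ((ℓ : ℝ) + 1)⌉ + 2)) ≤ 1) := by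
  simpa only [headerLength, ← add_assoc, Nat.cast_ofNat] using
    (kraft_self_delimiting_general Bool Fintype.card_bool).2
end

section
/- Let n, d₁, m₁, d₂, m₂ be natural numbers, let t_max be a real number, and let ε₁, ε₂ ≥ 0. Suppose C₁ : {0,1}ⁿ × {0,1}^{d₁} → {0,1}^{m₁} is a (t_max, ε₁) lossless conductor and C₂ : {0,1}^{m₁} × {0,1}^{d₂} → {0,1}^{m₂} is a (t_max + d₁, ε₂) lossless conductor. Then the composed function C : {0,1}ⁿ × {0,1}^{d₁+d₂} → {0,1}^{m₂} defined by C(x, (y₁, y₂)) := C₂(C₁(x, y₁), y₂) is a (t_max, ε₁ + ε₂) lossless conductor. -/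
/-- A probability mass function `P` on a type `V` has min-entropy at least `t` if
`P b ≤ 2^(-t)` for every `b`. -/
def MinEntropyGE {V : Type*} (P : PMF V) (t : ℝ) : Prop :=
  ∀ b : V, P b ≤ ENNReal.ofReal ((2 : ℝ) ^ (-t))

/-- Two probability mass functions on a finite type are `ε`-close if their statistical
distance `(1/2)·∑_b |P b − Q b|` is at most `ε`. -/
def EpsClose {V : Type*} [Fintype V] (P Q : PMF V) (ε : ℝ) : Prop :=
  (1 / 2) * ∑ b : V, |(P b).toReal - (Q b).toReal| ≤ ε

/-- The output distribution of `C : {0,1}ⁿ × {0,1}^d → {0,1}^m` on a source `X`: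
the distribution of `C (x, y)` where `x ∼ X` and `y` is uniform on `{0,1}^d`,
independently of `x`. -/
noncomputable def outputDist {n d m : ℕ}
    (C : (Fin n → Bool) × (Fin d → Bool) → (Fin m → Bool))
    (X : PMF (Fin n → Bool)) : PMF (Fin m → Bool) :=
  X.bind fun x => (PMF.uniformOfFintype (Fin d → Bool)).bind fun y => PMF.pure (C (x, y))

/-- `C` is a `t →_ε t'` condenser: for every source `X` of min-entropy at least `t`, the
output distribution of `C` on `X` is `ε`-close to some distribution of min-entropy
at least `t'`. -/
def IsCondenser {n d m : ℕ} (C : (Fin n → Bool) × (Fin d → Bool) → (Fin m → Bool))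
    (t t' ε : ℝ) : Prop :=
  ∀ X : PMF (Fin n → Bool), MinEntropyGE X t →
    ∃ Q : PMF (Fin m → Bool), MinEntropyGE Q t' ∧ EpsClose (outputDist C X) Q ε

/-- `C : {0,1}ⁿ × {0,1}^d → {0,1}^m` is a `(t_max, ε)` lossless conductor if it is a
`t →_ε (t + d)` condenser for every real `t ≤ t_max`. -/
def IsLosslessConductor {n d m : ℕ}
    (C : (Fin n → Bool) × (Fin d → Bool) → (Fin m → Bool)) (tmax ε : ℝ) : Prop :=
  ∀ t : ℝ, t ≤ tmax → IsCondenser C t (t + d) ε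

/-!
Running `C₁` and then `C₂` with a fresh uniform seed applies `C₂` to the source `outputDist C₁ X`,
which is `ε₁`-close to some `Q₁` of min-entropy `t + d₁`. Pushing two distributions through the same
random map cannot increase their statistical distance, so replacing `outputDist C₁ X` by `Q₁` costs
`ε₁`; on the source `Q₁` the guarantee of `C₂` costs another `ε₂`.
-/

section DiscreteDistributions

variable {α β γ : Type*}

lemma tsum_toReal_coe (P : PMF α) : ∑' a, (P a).toReal = 1 := by
  rw [← ENNReal.tsum_toReal_eq P.apply_ne_top, P.tsum_coe, ENNReal.toReal_one]

lemma toReal_bind_apply (P : PMF α) (f : α → PMF β) (b : β) :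
    (P.bind f b).toReal = ∑' a, (P a).toReal * (f a b).toReal := by
  simp_rw [PMF.bind_apply, ← ENNReal.toReal_mul]
  exact ENNReal.tsum_toReal_eq fun a =>
    ENNReal.mul_ne_top (P.apply_ne_top a) ((f a).apply_ne_top b)

lemma map_equiv_uniformOfFintype [Fintype α] [Nonempty α] [Fintype β] [Nonempty β] (e : α ≃ β) :
    (PMF.uniformOfFintype α).map e = PMF.uniformOfFintype β := by
  classical
  ext b
  simp [PMF.map_apply, ← e.symm_apply_eq, Fintype.card_congr e]

lemma uniformOfFintype_prod_bind [Fintype α] [Nonempty α] [Fintype β] [Nonempty β]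
    (f : α × β → PMF γ) :
    (PMF.uniformOfFintype (α × β)).bind f =
      (PMF.uniformOfFintype α).bind fun a => (PMF.uniformOfFintype β).bind fun b => f (a, b) := by
  ext c
  have card_inv : (Fintype.card (α × β) : ENNReal)⁻¹ =
      (Fintype.card α : ENNReal)⁻¹ * (Fintype.card β : ENNReal)⁻¹ := by
    rw [Fintype.card_prod, Nat.cast_mul, ENNReal.mul_inv (by simp) (by simp)]
  simp only [PMF.bind_apply, PMF.uniformOfFintype_apply, tsum_fintype, Fintype.sum_prod_type,
    card_inv, Finset.mul_sum, mul_assoc]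

lemma uniformOfFintype_fin_add_bind [Fintype α] [Nonempty α] (m n : ℕ)
    (f : (Fin (m + n) → α) → PMF β) :
    (PMF.uniformOfFintype (Fin (m + n) → α)).bind f =
      (PMF.uniformOfFintype (Fin m → α)).bind fun y₁ =>
        (PMF.uniformOfFintype (Fin n → α)).bind fun y₂ => f (Fin.append y₁ y₂) := by
  rw [← map_equiv_uniformOfFintype (Fin.appendEquiv m n), PMF.bind_map,
    uniformOfFintype_prod_bind]
  rfl

end DiscreteDistributions

namespace EpsClose

variable {U V : Type*} [Fintype V] {ε δ : ℝ}

lemma trans {P Q R : PMF V} (hPQ : EpsClose P Q ε) (hQR : EpsClose Q R δ) :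
    EpsClose P R (ε + δ) := by
  have triangle : ∑ b, |(P b).toReal - (R b).toReal| ≤
      ∑ b, |(P b).toReal - (Q b).toReal| + ∑ b, |(Q b).toReal - (R b).toReal| := by
    rw [← Finset.sum_add_distrib]
    exact Finset.sum_le_sum fun b _ => abs_sub_le _ _ _
  unfold EpsClose at *
  linarith

lemma bind [Fintype U] {P Q : PMF U} (h : EpsClose P Q ε) (f : U → PMF V) :
    EpsClose (P.bind f) (Q.bind f) ε := by
  refine le_trans (mul_le_mul_of_nonneg_left ?_ (by norm_num)) h
  calc ∑ b, |(P.bind f b).toReal - (Q.bind f b).toReal|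
      = ∑ b, |∑ a, ((P a).toReal - (Q a).toReal) * (f a b).toReal| := by
        simp only [toReal_bind_apply, tsum_fintype, sub_mul, Finset.sum_sub_distrib]
    _ ≤ ∑ b, ∑ a, |(P a).toReal - (Q a).toReal| * (f a b).toReal := by
        refine Finset.sum_le_sum fun b _ => (Finset.abs_sum_le_sum_abs _ _).trans_eq ?_
        simp only [abs_mul, ENNReal.abs_toReal]
    _ = ∑ a, |(P a).toReal - (Q a).toReal| * ∑ b, (f a b).toReal := by
        rw [Finset.sum_comm]
        simp only [Finset.mul_sum]
    _ = ∑ a, |(P a).toReal - (Q a).toReal| := by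
        simp only [← tsum_fintype (L := .unconditional V), tsum_toReal_coe, mul_one]

end EpsClose

section Composition

variable {n d₁ m₁ d₂ m₂ : ℕ}
variable (C₂ : (Fin m₁ → Bool) × (Fin d₂ → Bool) → (Fin m₂ → Bool))
  (C₁ : (Fin n → Bool) × (Fin d₁ → Bool) → (Fin m₁ → Bool))

/-- The composition `(x, (y₁, y₂)) ↦ C₂ (C₁ (x, y₁), y₂)` of seeded functions, where the seed
`(y₁, y₂)` is encoded as a single bit string with the bits of `y₁` first. -/
def seededComp : (Fin n → Bool) × (Fin (d₁ + d₂) → Bool) → (Fin m₂ → Bool) :=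
  fun z => C₂ (C₁ (z.1, fun i => z.2 (Fin.castAdd d₂ i)), fun j => z.2 (Fin.natAdd d₁ j))

lemma seededComp_append (x : Fin n → Bool) (y₁ : Fin d₁ → Bool) (y₂ : Fin d₂ → Bool) :
    seededComp C₂ C₁ (x, Fin.append y₁ y₂) = C₂ (C₁ (x, y₁), y₂) := by
  simp only [seededComp, Fin.append_left, Fin.append_right]

lemma outputDist_seededComp (X : PMF (Fin n → Bool)) :
    outputDist (seededComp C₂ C₁) X = outputDist C₂ (outputDist C₁ X) := by
  simp only [outputDist, PMF.bind_bind, PMF.pure_bind, uniformOfFintype_fin_add_bind,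
    seededComp_append]

variable {C₂ C₁}

lemma IsCondenser.comp {t t' t'' ε₁ ε₂ : ℝ} (h₂ : IsCondenser C₂ t' t'' ε₂)
    (h₁ : IsCondenser C₁ t t' ε₁) : IsCondenser (seededComp C₂ C₁) t t'' (ε₁ + ε₂) := by
  intro X hX
  obtain ⟨Q₁, hQ₁, hXQ₁⟩ := h₁ X hX
  obtain ⟨Q₂, hQ₂, hQ₁Q₂⟩ := h₂ Q₁ hQ₁
  have replace_source : EpsClose (outputDist (seededComp C₂ C₁) X) (outputDist C₂ Q₁) ε₁ := by
    rw [outputDist_seededComp]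
    exact hXQ₁.bind _
  exact ⟨Q₂, hQ₂, replace_source.trans hQ₁Q₂⟩

end Composition

/-- Composition of lossless conductors: if `C₁` is a `(t_max, ε₁)` lossless conductor and
`C₂` is a `(t_max + d₁, ε₂)` lossless conductor, then
`C (x, (y₁, y₂)) := C₂ (C₁ (x, y₁), y₂)` is a `(t_max, ε₁ + ε₂)` lossless conductor. -/
theorem losslessConductor_comp
    (n d₁ m₁ d₂ m₂ : ℕ) (tmax : ℝ) (ε₁ ε₂ : ℝ) (hε₁ : 0 ≤ ε₁) (hε₂ : 0 ≤ ε₂)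
    (C₁ : (Fin n → Bool) × (Fin d₁ → Bool) → (Fin m₁ → Bool))
    (C₂ : (Fin m₁ → Bool) × (Fin d₂ → Bool) → (Fin m₂ → Bool))
    (h₁ : IsLosslessConductor C₁ tmax ε₁)
    (h₂ : IsLosslessConductor C₂ (tmax + d₁) ε₂) :
    IsLosslessConductor
      (fun z : (Fin n → Bool) × (Fin (d₁ + d₂) → Bool) =>
        C₂ (C₁ (z.1, fun i => z.2 (Fin.castAdd d₂ i)), fun j => z.2 (Fin.natAdd d₁ j)))
      tmax (ε₁ + ε₂) := by
  intro t ht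
  have seed_length : t + ((d₁ + d₂ : ℕ) : ℝ) = t + d₁ + d₂ := by push_cast; ring
  rw [seed_length]
  have hC₂ : IsCondenser C₂ (t + d₁) (t + d₁ + d₂) ε₂ := h₂ (t + d₁) (by gcongr)
  exact hC₂.comp (h₁ t ht)
end
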